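/- With the notation of the iterated integrals Ω at φ = π/4, one has Ω_{3,1,2,3} = −(iπ³/4)·log 2 + (13/8)·iπ·ζ(3). -/

import Mathlib

noncomputable section

/-- `p₁ = e^{iπ/4}` -/
def p₁ : ℂ := Complex.exp (Complex.I * ((Real.pi : ℂ) / 4))
/-- `p₂ = -e^{-iπ/4}` -/
def p₂ : ℂ := -Complex.exp (-(Complex.I * ((Real.pi : ℂ) / 4)))
/-- `p₃ = -p₁` -/
def p₃ : ℂ := -p₁
/-- `p₄ = -p₂` -/
def p₄ : ℂ := -p₂

def F₁ (z : ℂ) : ℂ := 1 / (z - p₁) - 1 / (z - p₂) + 1 / (z - p₃) - 1 / (z - p₄)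

def F₂ (z : ℂ) : ℂ := 1 / (z - p₁) - 1 / (z - p₂) - 1 / (z - p₃) + 1 / (z - p₄)

def F₃ (z : ℂ) : ℂ := 1 / (z - p₁) + 1 / (z - p₂) - 1 / (z - p₃) - 1 / (z - p₄)

/-- Iterated integral along `[0, z]`:
`Omega [F_{i₁}, …, F_{iₙ}] z = Ω_{i₁,…,iₙ}(z)`, defined recursively by
`Ω_{i₁,…,i_k}(z) = ∫₀ᶻ Ω_{i₁,…,i_{k-1}}(t) · F_{i_k}(t) dt`, with `Ω_∅ ≡ 1`. -/
def Omega (fs : List (ℂ → ℂ)) : ℝ → ℂ :=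
  fs.foldl (fun g f => fun z => ∫ t in (0:ℝ)..z, g t * f (t : ℂ)) (fun _ => 1)

/- STATEMENT 16: `Ω_{3,1,2,3} = -(iπ³/4) log 2 + (13/8) iπ ζ(3)`. -/

section PartA
open MeasureTheory intervalIntegral
def w3 (z : ℝ) : ℝ := √2 * (1 + z^2) / (1 + z^4)
def w2 (z : ℝ) : ℝ := √2 * (1 - z^2) / (1 + z^4)
def w1 (z : ℝ) : ℝ := 2 * z / (1 + z^4)
def qq (z : ℝ) : ℝ := 2 * z^2 / (1 + z^4)
def rr (z : ℝ) : ℝ := √2 * z * (1 + z^2) / (1 + z^4)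
def tt (z : ℝ) : ℝ := √2 * z * (1 - z^2) / (1 + z^4)

lemma den_ne (z : ℝ) : (1 + z^4) ≠ 0 := by positivity
lemma sq2 : √2 ^ 2 = (2:ℝ) := by norm_num

lemma cw3 : Continuous w3 := by
  unfold w3; exact Continuous.div (by fun_prop) (by fun_prop) den_ne
lemma cw2 : Continuous w2 := by
  unfold w2; exact Continuous.div (by fun_prop) (by fun_prop) den_ne
lemma cw1 : Continuous w1 := by
  unfold w1; exact Continuous.div (by fun_prop) (by fun_prop) den_ne
lemma cqq : Continuous qq := by
  unfold qq; exact Continuous.div (by fun_prop) (by fun_prop) den_ne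

/-- integration operator -/
def II (f w : ℝ → ℝ) (z : ℝ) : ℝ := ∫ t in (0:ℝ)..z, f t * w t

lemma II_deriv {f w : ℝ → ℝ} (hf : Continuous f) (hw : Continuous w) (z : ℝ) :
    HasDerivAt (II f w) (f z * w z) z :=
  integral_hasDerivAt_right ((hf.mul hw).intervalIntegrable _ _)
    ((hf.mul hw).stronglyMeasurableAtFilter _ _) (hf.mul hw).continuousAt

lemma II_cont {f w : ℝ → ℝ} (hf : Continuous f) (hw : Continuous w) : Continuous (II f w) :=
  continuous_iff_continuousAt.2 fun z => (II_deriv hf hw z).continuousAt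

lemma II_add {f g w : ℝ → ℝ} (hf : Continuous f) (hg : Continuous g) (hw : Continuous w)
    (a b : ℝ) : II (fun t => a * f t + b * g t) w = fun z => a * II f w z + b * II g w z := by
  funext z
  unfold II
  rw [← intervalIntegral.integral_const_mul, ← intervalIntegral.integral_const_mul,
    ← intervalIntegral.integral_add]
  · congr 1; funext t; ring
  · exact (by fun_prop : Continuous fun t => a * (f t * w t)).intervalIntegrable _ _
  · exact (by fun_prop : Continuous fun t => b * (g t * w t)).intervalIntegrable _ _

/-- FTC for II -/
lemma II_eq {f w F : ℝ → ℝ} (hf : Continuous f) (hw : Continuous w)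
    (h : ∀ z, HasDerivAt F (f z * w z) z) (h0 : F 0 = 0) (z : ℝ) : II f w z = F z := by
  unfold II
  rw [integral_eq_sub_of_hasDerivAt (fun x _ => h x) ((hf.mul hw).intervalIntegrable _ _), h0,
    sub_zero]

lemma II_nonneg {f w : ℝ → ℝ} {z : ℝ} (hz0 : 0 ≤ z) (hz1 : z ≤ 1)
    (h : ∀ t, 0 ≤ t → t ≤ 1 → 0 ≤ f t) (hw : ∀ t, 0 ≤ t → t ≤ 1 → 0 ≤ w t) : 0 ≤ II f w z := by
  apply intervalIntegral.integral_nonneg hz0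
  intro t ht
  exact mul_nonneg (h t ht.1 (ht.2.trans hz1)) (hw t ht.1 (ht.2.trans hz1))

lemma II_mono {f g w : ℝ → ℝ} {z : ℝ} (hf : Continuous f) (hg : Continuous g) (hwc : Continuous w)
    (hz0 : 0 ≤ z) (hz1 : z ≤ 1)
    (h : ∀ t, 0 ≤ t → t ≤ z → f t ≤ g t) (hw : ∀ t, 0 ≤ t → t ≤ 1 → 0 ≤ w t) :
    II f w z ≤ II g w z := by
  apply intervalIntegral.integral_mono_on hz0 ((hf.mul hwc).intervalIntegrable _ _)
     ((hg.mul hwc).intervalIntegrable _ _)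
  intro t ht
  exact mul_le_mul_of_nonneg_right (h t ht.1 ht.2) (hw t ht.1 (ht.2.trans hz1))

lemma w1_nn (t : ℝ) (h : 0 ≤ t) (_h1 : t ≤ 1) : 0 ≤ w1 t := by unfold w1; positivity
lemma w3_nn (t : ℝ) (_h : 0 ≤ t) (_h1 : t ≤ 1) : 0 ≤ w3 t := by unfold w3; positivity
lemma w2_nn (t : ℝ) (h : 0 ≤ t) (h1 : t ≤ 1) : 0 ≤ w2 t := by
  unfold w2
  have : 0 ≤ 1 - t^2 := by nlinarith
  positivity
lemma qq_nn (t : ℝ) : 0 ≤ qq t := by unfold qq; positivity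
lemma qq_le (t : ℝ) : qq t ≤ 1 := by
  unfold qq; rw [div_le_one (by positivity)]; nlinarith [sq_nonneg (t^2-1)]
lemma qq_lt {t : ℝ} (h : 0 ≤ t) (h1 : t < 1) : qq t < 1 := by
  unfold qq; rw [div_lt_one (by positivity)]
  have : 0 < 1 - t^2 := by nlinarith
  nlinarith [pow_pos this 2]
lemma qq_mono {s t : ℝ} (h : 0 ≤ s) (hst : s ≤ t) (h1 : t ≤ 1) : qq s ≤ qq t := by
  unfold qq; rw [div_le_div_iff₀ (by positivity) (by positivity)]
  have h2 : s^2 ≤ t^2 := by gcongr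
  have h3 : t^2 ≤ 1 := by nlinarith
  have h4 : s^2 * t^2 ≤ 1 := by nlinarith [sq_nonneg s, sq_nonneg t]
  nlinarith [mul_nonneg (sub_nonneg.2 h2) (sub_nonneg.2 h4)]

lemma hd {f : ℝ → ℝ} {a b z : ℝ} (h : HasDerivAt f a z) (e : b = a) : HasDerivAt f b z := e ▸ h

lemma d_den (z : ℝ) : HasDerivAt (fun z : ℝ => 1 + z^4) (4*z^3) z := by
  simpa using (hasDerivAt_pow 4 z).const_add 1

lemma d_qq_r (z : ℝ) : HasDerivAt qq (2 * rr z * w2 z) z := by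
  have h := (((hasDerivAt_pow 2 z).const_mul 2).div (d_den z) (den_ne z))
  refine hd (h) ?_
  unfold rr w2
  have := den_ne z
  field_simp
  simp only [sq2]
  ring
lemma d_qq_t (z : ℝ) : HasDerivAt qq (2 * tt z * w3 z) z := by
  refine hd (d_qq_r z) ?_
  unfold rr w2 tt w3
  ring
lemma d_rr (z : ℝ) : HasDerivAt rr (w2 z * (1 + 2 * qq z)) z := by
  have h1 : HasDerivAt (fun z : ℝ => √2 * z * (1 + z^2)) (√2 * (1 + 3 * z^2)) z := by
    have := ((hasDerivAt_id z).const_mul √2).mul ((hasDerivAt_pow 2 z).const_add 1)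
    refine hd (this) ?_
    simp; ring
  refine hd (h1.div (d_den z) (den_ne z)) ?_
  unfold w2 qq
  have := den_ne z
  field_simp
  ring
lemma d_tt (z : ℝ) : HasDerivAt tt (w3 z * (1 - 2 * qq z)) z := by
  have h1 : HasDerivAt (fun z : ℝ => √2 * z * (1 - z^2)) (√2 * (1 - 3 * z^2)) z := by
    have := ((hasDerivAt_id z).const_mul √2).mul ((hasDerivAt_pow 2 z).const_sub 1)
    refine hd (this) ?_
    simp; ring
  refine hd (h1.div (d_den z) (den_ne z)) ?_
  unfold w3 qq
  have := den_ne z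
  field_simp
  ring
lemma rr_sq (z : ℝ) : rr z ^ 2 = qq z * (1 + qq z) := by
  unfold rr qq
  have := den_ne z
  field_simp
  simp only [sq2]
  ring
lemma tt_sq (z : ℝ) : tt z ^ 2 = qq z * (1 - qq z) := by
  unfold tt qq
  have := den_ne z
  field_simp
  simp only [sq2]
  ring
lemma tt_w1 (z : ℝ) : tt z * w1 z = qq z * w2 z := by
  unfold tt qq w1 w2
  ring

/-- q^(k) t derivative -/
lemma d_qt (k : ℕ) (z : ℝ) : HasDerivAt (fun z => qq z ^ k * tt z)
    (((2*k+1) * qq z ^ k - (2*k+2) * qq z ^ (k+1)) * w3 z) z := by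
  have h := ((d_qq_t z).pow k).mul (d_tt z)
  refine hd (h) ?_
  rcases k with _ | k
  · simp; ring
  · have := tt_sq z
    simp only [Nat.add_sub_cancel, Pi.pow_apply]
    push_cast
    linear_combination (-2 * (k+1) * qq z ^ k * w3 z) * this
lemma d_qr (k : ℕ) (z : ℝ) : HasDerivAt (fun z => qq z ^ k * rr z)
    (((2*k+1) * qq z ^ k + (2*k+2) * qq z ^ (k+1)) * w2 z) z := by
  have h := ((d_qq_r z).pow k).mul (d_rr z)
  refine hd (h) ?_
  rcases k with _ | k
  · simp; ring
  · have := rr_sq z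
    simp only [Nat.add_sub_cancel, Pi.pow_apply]
    push_cast
    linear_combination (-2 * (k+1) * qq z ^ k * w2 z) * this
lemma d_qs (k : ℕ) (z : ℝ) : HasDerivAt (fun z => qq z ^ (k+1))
    (((2*k+2) * (qq z ^ k * rr z)) * w2 z) z := by
  have h := ((d_qq_r z).pow (k+1))
  refine hd (h) ?_
  simp only [Nat.add_sub_cancel, Pi.pow_apply]
  push_cast
  ring

def VV (k : ℕ) : ℝ → ℝ := II (fun t => qq t ^ k) w3
def UU (k : ℕ) : ℝ → ℝ := II (II (fun t => qq t ^ k) w2) w2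
def WW (k : ℕ) : ℝ := VV k 1
def MM (k : ℕ) : ℝ := II (UU k) w3 1
lemma cq (k : ℕ) : Continuous (fun t => qq t ^ k) := cqq.pow k
lemma cVV (k : ℕ) : Continuous (VV k) := II_cont (cq k) cw3
lemma cUU (k : ℕ) : Continuous (UU k) := II_cont (II_cont (cq k) cw2) cw2

lemma VV_rec (k : ℕ) (z : ℝ) :
    (2*k+1) * VV k z - (2*k+2) * VV (k+1) z = qq z ^ k * tt z := by
  have h := II_eq (f := fun t => (2*k+1) * qq t ^ k + (-(2*k+2)) * qq t ^ (k+1)) (w := w3)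
    (by have := cqq; fun_prop) cw3 (F := fun z => qq z ^ k * tt z)
    (fun z => by convert d_qt k z using 1; ring) (by simp [tt]) z
  rw [II_add (cq k) (cq (k+1)) cw3] at h
  rw [← h]; unfold VV; ring

lemma UU_rec (k : ℕ) (z : ℝ) :
    (2*k+2)*(2*k+1) * UU k z + (2*k+2)^2 * UU (k+1) z = qq z ^ (k+1) := by
  have h1 : II (fun t => (2*k+1) * qq t ^ k + (2*k+2) * qq t ^ (k+1)) w2
      = fun z => qq z ^ k * rr z := by
    funext z
    exact II_eq (by have := cqq; fun_prop) cw2 (fun z => d_qr k z) (by simp [rr]) z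
  rw [II_add (cq k) (cq (k+1)) cw2] at h1
  have hc : ∀ k, Continuous (II (fun t => qq t ^ k) w2) := fun k => II_cont (cq k) cw2
  have h2 := II_eq (f := fun t => ((2*k+2)*(2*k+1)) * II (fun t => qq t ^ k) w2 t
      + (2*k+2)^2 * II (fun t => qq t ^ (k+1)) w2 t) (w := w2)
    (by have := hc k; have := hc (k+1); fun_prop) cw2 (F := fun z => qq z ^ (k+1))
    (fun z => by convert d_qs k z using 1; rw [← congrFun h1 z]; ring) (by simp [qq]) z
  rw [II_add (hc k) (hc (k+1)) cw2] at h2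
  exact h2

lemma WW_rec (k : ℕ) : (2*k+1) * WW k = (2*k+2) * WW (k+1) := by
  have := VV_rec k 1
  simp only [tt] at this
  norm_num at this
  unfold WW; linarith

lemma MM_rec (k : ℕ) : (2*k+2)*(2*k+1) * MM k + (2*k+2)^2 * MM (k+1) = WW (k+1) := by
  have h := congrFun (II_add (cUU k) (cUU (k+1)) cw3 ((2*k+2)*(2*k+1)) ((2*k+2)^2)) 1
  simp only [UU_rec] at h
  exact h.symm

lemma MM_nn (k : ℕ) : 0 ≤ MM k :=
  II_nonneg zero_le_one le_rfl (fun _ h h1 => II_nonneg h h1 (fun _ h h1 =>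
    II_nonneg h h1 (fun t _ _ => pow_nonneg (qq_nn t) k) w2_nn) w2_nn) w3_nn

lemma VV_nn (k : ℕ) {z : ℝ} (h : 0 ≤ z) (h1 : z ≤ 1) : 0 ≤ VV k z :=
    II_nonneg h h1 (fun t _ _ => pow_nonneg (qq_nn t) k) w3_nn

lemma VV_zero (z : ℝ) : VV 0 z = Real.arctan (√2*z+1) + Real.arctan (√2*z-1) := by
  refine II_eq (F := fun z => Real.arctan (√2*z+1) + Real.arctan (√2*z-1)) (cq 0) cw3 ?_ ?_ z
  · intro z
    have h1 := (((hasDerivAt_id z).const_mul √2).add_const 1).arctan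
    have h2 := (((hasDerivAt_id z).const_mul √2).sub_const 1).arctan
    refine hd (h1.add h2) ?_
    simp only [id, w3, pow_zero]
    have e1 : 1 + (√2*z+1)^2 = 2 * (1 + z^2 + √2 * z) := by ring_nf; rw [sq2]; ring
    have e2 : 1 + (√2*z-1)^2 = 2 * (1 + z^2 - √2 * z) := by ring_nf; rw [sq2]; ring
    have e3 : (1 + z^2 + √2 * z) * (1 + z^2 - √2 * z) = 1 + z^4 := by ring_nf; rw [sq2]; ring
    have p1 : (1 + z^2 + √2 * z) ≠ 0 := by
      intro h; rw [h] at e3; have := den_ne z; simp at e3; exact this e3.symm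
    have p2 : (1 + z^2 - √2 * z) ≠ 0 := by
      intro h; rw [h] at e3; have := den_ne z; simp at e3; exact this e3.symm
    rw [e1, e2, ← e3]
    field_simp
    ring
  · simp

lemma WW_zero : WW 0 = Real.pi / 2 := by
  unfold WW
  rw [VV_zero]
  have : √2*1-1 = (√2*1+1)⁻¹ := by
    refine eq_inv_of_mul_eq_one_left ?_; ring_nf; rw [sq2]; ring
  rw [this, Real.arctan_inv_of_pos (by positivity)]; ring

lemma WW_pos (k : ℕ) : 0 < WW k := by
  induction k with
  | zero => rw [WW_zero]; positivity
  | succ k ih =>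
    have := WW_rec k
    have h : 0 < (2*(k:ℝ)+2) * WW (k+1) := by rw [← this]; positivity
    exact pos_of_mul_pos_right h (by positivity)
def XX (k : ℕ) : ℝ := 4 * MM k / WW k
lemma XX_nn (k : ℕ) : 0 ≤ XX k := by
  have := MM_nn k; have := WW_pos k; unfold XX; positivity
lemma XX_rec (k : ℕ) : XX k + XX (k+1) = 1 / ((k:ℝ)+1)^2 := by
  have h1 := WW_rec k
  have h2 := MM_rec k
  have p1 := WW_pos k
  have p2 := WW_pos (k+1)
  have e : WW k = (2*k+2) * WW (k+1) / (2*k+1) := by field_simp; linarith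
  unfold XX
  rw [e]
  field_simp
  linear_combination 2 * h2

/-- coefficient -/
def aa (k : ℕ) : ℝ := (Real.pi/2) / WW k
lemma aa_pos (k : ℕ) : 0 < aa k := by have := WW_pos k; unfold aa; positivity
lemma aa_zero : aa 0 = 1 := by unfold aa; rw [WW_zero]; field_simp
lemma aa_rec (k : ℕ) : aa (k+1) = aa k * (2*k+2) / (2*k+1) := by
  have h1 := WW_rec k
  have p1 := WW_pos k
  have p2 := WW_pos (k+1)
  unfold aa
  field_simp
  linarith
lemma aa_le (k : ℕ) : aa k ≤ k + 1 := by
  induction k with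
  | zero => simp [aa_zero]
  | succ k ih =>
    rw [aa_rec, div_le_iff₀ (by positivity)]
    push_cast
    nlinarith [aa_pos k, (Nat.cast_nonneg k : (0:ℝ) ≤ k)]

lemma aaVV (k : ℕ) (z : ℝ) : aa k * VV k z * w1 z =
    aa (k+1) / (2*k+2) * (qq z ^ (k+1) * w2 z) + aa (k+1) * VV (k+1) z * w1 z := by
  have h := VV_rec k z
  have h2 := tt_w1 z
  rw [aa_rec]
  field_simp
  rw [pow_succ, mul_assoc (qq z ^ k), ← h2]
  linear_combination (aa k * w1 z) * h

def RR (k : ℕ) : ℝ → ℝ := II (II (fun t => aa k * VV k t) w1) w2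
lemma cRR (k : ℕ) : Continuous (RR k) := 
  II_cont (II_cont (continuous_const.mul (cVV k)) cw1) cw2

lemma RR_rec (k : ℕ) : RR k = fun z => aa (k+1)/(2*k+2) * UU (k+1) z + 1 * RR (k+1) z := by
  have h : II (fun t => aa k * VV k t) w1 = fun z => 
      aa (k+1)/(2*k+2) * II (fun t => qq t ^ (k+1)) w2 z + 1 * II (fun t => aa (k+1) * VV (k+1) t) w1 z := by
    funext z
    unfold II
    rw [← intervalIntegral.integral_const_mul, one_mul, ← intervalIntegral.integral_add]
    · congr 1; funext t; exact aaVV k t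
    · have := cq (k+1); have := cw2
      exact (by fun_prop : Continuous fun t => aa (k+1)/(2*k+2) * (qq t ^ (k+1) * w2 t)).intervalIntegrable _ _
    · have := cVV (k+1); have := cw1
      exact (by fun_prop : Continuous fun t => aa (k+1) * VV (k+1) t * w1 t).intervalIntegrable _ _
  unfold RR
  rw [h, II_add (II_cont (cq _) cw2) (II_cont (f := fun t => aa (k+1) * VV (k+1) t) (continuous_const.mul (cVV _)) cw1) cw2]
  rfl

def JJ (k : ℕ) : ℝ := II (RR k) w3 1
lemma JJ_rec (k : ℕ) : JJ k = Real.pi / 16 * (XX (k+1) / (k+1)) + JJ (k+1) := by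
  unfold JJ
  rw [congrFun (congrArg (fun f => II f w3) (RR_rec k)) 1, II_add (cUU _) (cRR _) cw3]
  have p2 := WW_pos (k+1)
  change aa (k+1)/(2*k+2) * MM (k+1) + _ = _
  unfold aa XX
  field_simp
  ring

lemma RR_nn (k : ℕ) {z : ℝ} (h : 0 ≤ z) (h1 : z ≤ 1) : 0 ≤ RR k z :=
  II_nonneg h h1 (fun _ h h1 => II_nonneg h h1 
    (fun _ h h1 => mul_nonneg (aa_pos k).le (VV_nn k h h1)) w1_nn) w2_nn
lemma UU_nn (k : ℕ) {z : ℝ} (h : 0 ≤ z) (h1 : z ≤ 1) : 0 ≤ UU k z :=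
  II_nonneg h h1 (fun _ h h1 =>
    II_nonneg h h1 (fun t _ _ => pow_nonneg (qq_nn t) k) w2_nn) w2_nn
lemma RR_le (k : ℕ) {z : ℝ} (h : 0 ≤ z) (h1 : z ≤ 1) : RR k z ≤ RR 0 z := by
  induction k with
  | zero => rfl
  | succ k ih =>
    have := congrFun (RR_rec k) z
    have h2 := UU_nn (k+1) h h1
    have h3 := aa_pos (k+1)
    have : 0 ≤ aa (k+1)/(2*k+2) * UU (k+1) z := by positivity
    linarith

open Filter Topology in
lemma RR_lim {z : ℝ} (h : 0 ≤ z) (h1 : z < 1) : Tendsto (fun k => RR k z) atTop (𝓝 0) := by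
  set C : ℝ := II (II (II (fun _ => 1) w3) w1) w2 z with hC
  have c1 : Continuous (II (fun _ => 1) w3) := II_cont continuous_const cw3
  have c2 : Continuous (II (II (fun _ => 1) w3) w1) := II_cont c1 cw1
  have key : ∀ k, RR k z ≤ ((k+1) * qq z ^ k) * C := by
    intro k
    have e1 : ∀ c : ℝ, ∀ f w, II (fun t => c * f t) w = fun z => c * II f w z := by
      intro c f w; funext z; unfold II; rw [← intervalIntegral.integral_const_mul]
      congr 1; funext t; ring
    have : ((k+1) * qq z ^ k) * C = 
      II (II (fun t => ((k+1) * qq z ^ k) * (II (fun _ => 1) w3) t) w1) w2 z := by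
      rw [e1, e1]
    rw [this]
    refine II_mono (II_cont (continuous_const.mul (cVV k)) cw1) 
      (II_cont (continuous_const.mul c1) cw1) cw2 h h1.le ?_ w2_nn
    intro y hy0 hy
    refine II_mono (continuous_const.mul (cVV k)) 
      (continuous_const.mul c1) cw1 hy0 (hy.trans h1.le) ?_ w1_nn
    intro x hx0 hx
    have : VV k x ≤ qq z ^ k * II (fun _ => 1) w3 x := by
      rw [← congrFun (e1 _ _ _) x]
      refine II_mono (cq k) (by fun_prop) cw3 hx0 (hx.trans (hy.trans h1.le)) ?_ w3_nn
      intro t ht0 ht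
      rw [mul_one]
      exact pow_le_pow_left₀ (qq_nn t) (qq_mono ht0 (ht.trans (hx.trans hy)) h1.le) k
    have h3 := VV_nn k hx0 (hx.trans (hy.trans h1.le))
    calc aa k * VV k x ≤ (k+1) * (qq z ^ k * II (fun _ => 1) w3 x) :=
          mul_le_mul (aa_le k) this h3 (by positivity)
      _ = _ := by ring
  have l1 : Tendsto (fun k : ℕ => ((k+1) * qq z ^ k) * C) atTop (𝓝 0) := by
    have ha : |qq z| < 1 := by rw [abs_of_nonneg (qq_nn z)]; exact qq_lt h h1
    have := ((tendsto_self_mul_const_pow_of_abs_lt_one ha).add 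
      (tendsto_pow_atTop_nhds_zero_of_abs_lt_one ha)).mul_const C
    simp only [add_zero, zero_mul] at this
    refine this.congr fun k => by ring
  exact squeeze_zero (fun k => RR_nn k h h1.le) key l1

open Filter Topology in
lemma JJ_lim : Tendsto JJ atTop (𝓝 0) := by
  have h := intervalIntegral.tendsto_integral_filter_of_dominated_convergence (μ := volume)
    (a := 0) (b := 1) (l := atTop) (F := fun k t => RR k t * w3 t) (f := fun _ => (0:ℝ))
    (fun t => RR 0 t * w3 t) ?_ ?_ ?_ ?_
  · simp only [intervalIntegral.integral_zero] at h
    exact h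
  · exact Eventually.of_forall fun k => ((cRR k).mul cw3).aestronglyMeasurable
  · refine Eventually.of_forall fun k => Eventually.of_forall fun t ht => ?_
    rw [Set.uIoc_of_le zero_le_one] at ht
    rw [Real.norm_eq_abs, abs_of_nonneg (mul_nonneg (RR_nn k ht.1.le ht.2) (w3_nn _ ht.1.le ht.2))]
    exact mul_le_mul_of_nonneg_right (RR_le k ht.1.le ht.2) (w3_nn _ ht.1.le ht.2)
  · exact ((cRR 0).mul cw3).intervalIntegrable _ _
  · have : ∀ᵐ x : ℝ, x ≠ 1 := by simp [ae_iff, measure_singleton]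
    filter_upwards [this] with t ht1 ht
    rw [Set.uIoc_of_le zero_le_one] at ht
    simpa using (RR_lim ht.1.le (lt_of_le_of_ne ht.2 ht1)).mul_const (w3 t)

lemma JJ_sum (n : ℕ) : JJ 0 = Real.pi/16 * ∑ k ∈ Finset.range n, XX (k+1)/(k+1) + JJ n := by
  induction n with
  | zero => simp
  | succ n ih => rw [Finset.sum_range_succ, ih, JJ_rec n]; ring

open Filter Topology in
lemma sum_lim : Tendsto (fun n => ∑ k ∈ Finset.range n, XX (k+1)/(k+1)) atTop
    (𝓝 (16/Real.pi * JJ 0)) := by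
  have := (JJ_lim.const_sub (JJ 0)).const_mul (16/Real.pi)
  rw [sub_zero] at this
  refine this.congr fun n => ?_
  rw [JJ_sum n]
  field_simp
  ring

end PartA
section PartB
open MeasureTheory Filter Topology Set

lemma hsc {f g : ℕ → ℝ} {a b : ℝ} (h : HasSum f a) (e : ∀ n, g n = f n) (e2 : b = a) :
    HasSum g b := by
  rw [e2, show g = f from funext e]; exact h

lemma log_sq_int (n : ℕ) : IntegrableOn (fun x : ℝ => x^n * Real.log x^2) (Ioo 0 1) ∧
    ∫ x in Ioo (0:ℝ) 1, x^n * Real.log x^2 = 2/((n:ℝ)+1)^3 := by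
  set G : ℝ → ℝ := fun x => x^n * ((√x * Real.log √x)^2 * 4/((n:ℝ)+1) - 2 * (x * Real.log x)/((n:ℝ)+1)^2 + 2*x/((n:ℝ)+1)^3) with hG
  have hc : Continuous G := by
    have h1 := Real.continuous_mul_log
    have h2 : Continuous fun x : ℝ => √x * Real.log √x := h1.comp Real.continuous_sqrt
    simp only [hG]
    fun_prop
  have hder : ∀ x ∈ Ioo (0:ℝ) 1, HasDerivAt G (x^n * Real.log x^2) x := by
    intro x hx
    have hx0 := hx.1
    have e : G =ᶠ[𝓝 x] fun x => x^(n+1) * (Real.log x^2 /((n:ℝ)+1) - 2 * Real.log x/((n:ℝ)+1)^2 + 2/((n:ℝ)+1)^3) := by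
      filter_upwards [lt_mem_nhds hx0] with y hy
      simp only [hG]
      rw [mul_pow, Real.sq_sqrt (le_of_lt hy), Real.log_sqrt (le_of_lt hy)]
      ring
    refine HasDerivAt.congr_of_eventuallyEq ?_ e
    have hl := Real.hasDerivAt_log hx0.ne'
    have := (hasDerivAt_pow (n+1) x).mul ((((hl.pow 2).div_const ((n:ℝ)+1)).sub ((hl.const_mul 2).div_const (((n:ℝ)+1)^2))).add_const (2/((n:ℝ)+1)^3))
    refine hd this ?_
    simp only [Pi.pow_apply, Pi.sub_apply, Nat.add_sub_cancel]
    push_cast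
    field_simp
    ring
  have hpos : ∀ x ∈ Ioo (0:ℝ) 1, 0 ≤ x^n * Real.log x^2 := fun x hx => by
    have := hx.1; positivity
  have hi := intervalIntegral.integrableOn_deriv_of_nonneg hc.continuousOn hder hpos
  constructor
  · exact hi.mono_set Ioo_subset_Ioc_self
  · rw [← integral_Ioc_eq_integral_Ioo, ← intervalIntegral.integral_of_le zero_le_one,
      intervalIntegral.integral_eq_sub_of_hasDerivAt_of_le zero_le_one hc.continuousOn hder
      ((intervalIntegrable_iff_integrableOn_Ioc_of_le zero_le_one).2 hi)]
    simp [hG]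

lemma hasSum_int {F : ℕ → ℝ → ℝ} {f : ℝ → ℝ} {c : ℕ → ℝ} {C : ℝ}
    (hF : ∀ n, IntegrableOn (F n) (Ioo 0 1)) (hF0 : ∀ n, ∀ x ∈ Ioo (0:ℝ) 1, 0 ≤ F n x)
    (hFi : ∀ n, ∫ x in Ioo (0:ℝ) 1, F n x = c n) (hC : HasSum c C)
    (hs : ∀ x ∈ Ioo (0:ℝ) 1, HasSum (fun n => F n x) (f x)) :
    IntegrableOn f (Ioo 0 1) ∧ ∫ x in Ioo (0:ℝ) 1, f x = C := by
  have hn : ∀ n, ∫ x in Ioo (0:ℝ) 1, ‖F n x‖ = c n := fun n => by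
    rw [← hFi n]
    refine setIntegral_congr_fun measurableSet_Ioo fun x hx => ?_
    exact Real.norm_of_nonneg (hF0 n x hx)
  have hsum : Summable fun n => ∫ x in Ioo (0:ℝ) 1, ‖F n x‖ := by
    simp only [hn]; exact hC.summable
  have h := hasSum_integral_of_summable_integral_norm hF hsum
  have e : ∫ x in Ioo (0:ℝ) 1, ∑' n, F n x = ∫ x in Ioo (0:ℝ) 1, f x :=
    setIntegral_congr_fun measurableSet_Ioo fun x hx => (hs x hx).tsum_eq
  rw [e] at h
  simp only [hFi] at h
  have hint : ∫ x in Ioo (0:ℝ) 1, f x = C := h.unique hC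
  refine ⟨?_, hint⟩
  have hi2 : Integrable (fun x => ∑' n, F n x) (volume.restrict (Ioo (0:ℝ) 1)) := by
    by_cases hz : C = 0
    · -- all zero
      have hc0 : ∀ n, c n = 0 := by
        have hcn : ∀ n, 0 ≤ c n := fun n => by rw [← hn n]; positivity
        have := (hasSum_zero_iff_of_nonneg hcn).1 (hz ▸ hC)
        exact fun n => congrFun this n
      have ha : ∀ n, ∀ᵐ x ∂(volume.restrict (Ioo (0:ℝ) 1)), F n x = 0 := fun n => by
        have h1 := (integral_eq_zero_iff_of_nonneg (fun x => norm_nonneg (F n x)) (hF n).norm).1 ((hn n).trans (hc0 n))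
        filter_upwards [h1] with x hx
        simpa using hx
      refine (integrable_zero _ _ _).congr ?_
      filter_upwards [ae_all_iff.2 ha] with x hx
      simp [hx]
    · by_contra hni
      exact hz (by rw [← hint, ← e]; exact integral_undef hni)
  refine hi2.congr ?_
  filter_upwards [ae_restrict_mem measurableSet_Ioo] with x hx using (hs x hx).tsum_eq

def z3 : ℝ := ∑' n : ℕ, 1/((n:ℝ)+1)^3
lemma hz3 : HasSum (fun n : ℕ => 1/((n:ℝ)+1)^3) z3 := by
  refine Summable.hasSum ?_
  have := (summable_nat_add_iff 1).2 (Real.summable_one_div_nat_pow.2 (by norm_num : 1 < 3))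
  simpa using this
lemma hz2 : HasSum (fun n : ℕ => 1/((n:ℝ)+1)^2) (Real.pi^2/6) := by
  have := (hasSum_nat_add_iff' 1).2 hasSum_zeta_two
  simpa using this
lemma zeta3 : riemannZeta 3 = (z3 : ℂ) := by
  have h := zeta_nat_eq_tsum_of_gt_one (k := 3) (by norm_num)
  have h2 := (hasSum_nat_add_iff' (f := fun n : ℕ => 1/(n:ℝ)^3) (g := z3) 1).1 (by simpa using hz3)
  have h3 := (Complex.hasSum_ofReal.2 h2).tsum_eq
  push_cast at h h3
  rw [h, ← h3]

lemma odd_sum (p : ℕ) (hp : p ≠ 0) {C : ℝ} (h : HasSum (fun n : ℕ => 1/((n:ℝ)+1)^p) C) :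
    HasSum (fun n : ℕ => 1/(2*(n:ℝ)+1)^p) (C - C / 2^p) := by
  have h1 : HasSum (fun n : ℕ => 1/((((2*n+1 : ℕ)):ℝ)+1)^p) (C/2^p) := by
    refine hsc (h.div_const (2^p)) (fun n => ?_) rfl
    push_cast
    rw [div_div, ← mul_pow]; ring_nf
  have hs : Summable (fun n : ℕ => 1/((((2*n : ℕ)):ℝ)+1)^p) :=
    h.summable.comp_injective (i := fun n : ℕ => 2*n) (fun a b h => by simpa using h)
  have h2 := (HasSum.even_add_odd (f := fun n : ℕ => 1/((n:ℝ)+1)^p) hs.hasSum h1).unique h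
  exact hsc hs.hasSum (fun n => by push_cast; rfl) (by linarith)

lemma int_L : IntegrableOn (fun x : ℝ => Real.log x^2/(1-x)) (Ioo 0 1) ∧
    ∫ x in Ioo (0:ℝ) 1, Real.log x^2/(1-x) = 2 * z3 := by
  refine hasSum_int (F := fun n x => x^n * Real.log x^2) (fun n => (log_sq_int n).1) ?_
    (fun n => (log_sq_int n).2) ?_ ?_
  · intro n x hx; have := hx.1; positivity
  · exact hsc (hz3.mul_left 2) (fun n => by ring) rfl
  · intro x hx
    exact hsc ((hasSum_geometric_of_lt_one hx.1.le hx.2).mul_right (Real.log x^2)) (fun n => rfl) (by ring)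

lemma int_K : IntegrableOn (fun x : ℝ => 2 * Real.log x^2/(1-x^2)) (Ioo 0 1) ∧
    ∫ x in Ioo (0:ℝ) 1, 2 * Real.log x^2/(1-x^2) = 7/2 * z3 := by
  refine hasSum_int (F := fun n x => 2 * (x^(2*n) * Real.log x^2)) (fun n => (log_sq_int (2*n)).1.const_mul 2) ?_
    (c := fun n => 4 * (1/(2*(n:ℝ)+1)^3)) (fun n => ?_) ?_ ?_
  · intro n x hx; have := hx.1; positivity
  · rw [integral_const_mul, (log_sq_int (2*n)).2]; push_cast; ring
  · exact hsc ((odd_sum 3 (by norm_num) hz3).mul_left 4) (fun n => rfl) (by ring)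
  · intro x hx
    have h1 : x^2 < 1 := by nlinarith [hx.1, hx.2]
    exact hsc ((hasSum_geometric_of_lt_one (sq_nonneg x) h1).mul_right (2*Real.log x^2))
      (fun n => by rw [pow_mul]; ring) (by ring)

lemma int_sum : IntegrableOn (fun x : ℝ => (Real.log (1-x) + Real.log (1+x))^2/x) (Ioo 0 1) ∧
    ∫ x in Ioo (0:ℝ) 1, (Real.log (1-x) + Real.log (1+x))^2/x = z3 := by
  have himg : (fun x : ℝ => 1 - x^2) '' Ioo 0 1 = Ioo 0 1 := by
    ext y; constructor
    · rintro ⟨x, hx, rfl⟩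
      have := hx.1; have := hx.2
      constructor
      · change 0 < 1 - x^2; nlinarith
      · change 1 - x^2 < 1; nlinarith
    · intro hy
      refine ⟨√(1-y), ⟨Real.sqrt_pos.2 (by linarith [hy.2]), ?_⟩, ?_⟩
      · rw [Real.sqrt_lt' one_pos]; linarith [hy.1]
      · simp only; rw [Real.sq_sqrt (by linarith [hy.2])]; ring
  have hinj : InjOn (fun x : ℝ => 1 - x^2) (Ioo 0 1) := by
    intro a ha b hb h
    have : a^2 = b^2 := by simpa using h
    exact (pow_left_inj₀ ha.1.le hb.1.le (by norm_num)).1 this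
  have hd' : ∀ x ∈ Ioo (0:ℝ) 1, HasDerivWithinAt (fun x : ℝ => 1 - x^2) (-(2*x)) (Ioo 0 1) x := by
    intro x _
    exact (hd ((hasDerivAt_pow 2 x).const_sub 1) (by simp)).hasDerivWithinAt
  have h1 := integrableOn_image_iff_integrableOn_abs_deriv_smul measurableSet_Ioo hd' hinj (fun x : ℝ => Real.log x^2/(1-x))
  have h2 := integral_image_eq_integral_abs_deriv_smul measurableSet_Ioo hd' hinj (fun x : ℝ => Real.log x^2/(1-x))
  rw [himg] at h1 h2
  have e : ∀ x ∈ Ioo (0:ℝ) 1, |(-(2*x))| • (Real.log (1-x^2)^2/(1-(1-x^2))) = 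
      2 * ((Real.log (1-x) + Real.log (1+x))^2/x) := by
    intro x hx
    have h0 := hx.1
    have := hx.2
    rw [← Real.log_mul (by linarith) (by linarith), abs_neg, abs_of_pos (by linarith), smul_eq_mul,
      show (1-x)*(1+x) = 1-x^2 by ring]
    field_simp
    ring
  rw [setIntegral_congr_fun measurableSet_Ioo e, integral_const_mul, int_L.2] at h2
  have h3 := (integrableOn_congr_fun e measurableSet_Ioo).1 (h1.1 int_L.1)
  constructor
  · refine (h3.const_mul (1/2)).congr (Eventually.of_forall fun x => ?_)
    simp only
    ring
  · linarith

lemma int_diff : IntegrableOn (fun x : ℝ => (Real.log (1-x) - Real.log (1+x))^2/x) (Ioo 0 1) ∧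
    ∫ x in Ioo (0:ℝ) 1, (Real.log (1-x) - Real.log (1+x))^2/x = 7/2 * z3 := by
  have hm : ∀ x ∈ Ioo (0:ℝ) 1, (1-x)/(1+x) ∈ Ioo (0:ℝ) 1 := by
    intro x hx
    have := hx.1; have := hx.2
    have h1 : 0 < 1 - x := by linarith
    have h2 : 0 < 1 + x := by linarith
    exact ⟨by positivity, by rw [div_lt_one h2]; linarith⟩
  have hinv : ∀ x ∈ Ioo (0:ℝ) 1, (1-(1-x)/(1+x))/(1+(1-x)/(1+x)) = x := by
    intro x hx
    have := hx.1
    have h2 : 1 + x ≠ 0 := by linarith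
    have : 1+(1-x)/(1+x) = 2/(1+x) := by field_simp; ring
    rw [this]; field_simp; ring
  have himg : (fun x : ℝ => (1-x)/(1+x)) '' Ioo 0 1 = Ioo 0 1 := by
    ext y; constructor
    · rintro ⟨x, hx, rfl⟩
      exact hm x hx
    · intro hy
      exact ⟨_, hm y hy, hinv y hy⟩
  have hinj : InjOn (fun x : ℝ => (1-x)/(1+x)) (Ioo 0 1) := by
    intro a ha b hb h
    rw [← hinv a ha, ← hinv b hb]
    simp only at h
    rw [h]
  have hd' : ∀ x ∈ Ioo (0:ℝ) 1, HasDerivWithinAt (fun x : ℝ => (1-x)/(1+x)) (-(2/(1+x)^2)) (Ioo 0 1) x := by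
    intro x hx
    have h2 : 1 + x ≠ 0 := by linarith [hx.1]
    refine (hd (((hasDerivAt_id x).const_sub 1).div ((hasDerivAt_id x).const_add 1) h2) ?_).hasDerivWithinAt
    simp only [id]
    field_simp
    ring
  have h1 := integrableOn_image_iff_integrableOn_abs_deriv_smul measurableSet_Ioo hd' hinj (fun x : ℝ => 2 * Real.log x^2/(1-x^2))
  have h2 := integral_image_eq_integral_abs_deriv_smul measurableSet_Ioo hd' hinj (fun x : ℝ => 2 * Real.log x^2/(1-x^2))
  rw [himg] at h1 h2
  have e : ∀ x ∈ Ioo (0:ℝ) 1, |(-(2/(1+x)^2))| • (2*Real.log ((1-x)/(1+x))^2/(1-((1-x)/(1+x))^2)) = 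
      ((Real.log (1-x) - Real.log (1+x))^2/x) := by
    intro x hx
    have h0 := hx.1
    have := hx.2
    have h2 : 1 + x ≠ 0 := by linarith [hx.1]
    rw [← Real.log_div (by linarith) (by linarith), abs_neg, abs_of_pos (by positivity), smul_eq_mul]
    have : 1-((1-x)/(1+x))^2 = 4*x/(1+x)^2 := by field_simp; ring
    rw [this]
    field_simp
    ring
  rw [setIntegral_congr_fun measurableSet_Ioo e, int_K.2] at h2
  exact ⟨(integrableOn_congr_fun e measurableSet_Ioo).1 (h1.1 int_K.1), h2.symm⟩

lemma int_Q : ∫ x in Ioo (0:ℝ) 1, (-Real.log (1-x)/x) * Real.log (1+x) = 5/8 * z3 := by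
  have h := integral_sub int_diff.1 int_sum.1
  rw [int_diff.2, int_sum.2] at h
  have e : ∀ x : ℝ, (Real.log (1-x) - Real.log (1+x))^2/x - (Real.log (1-x) + Real.log (1+x))^2/x
    = 4 * ((-Real.log (1-x)/x) * Real.log (1+x)) := fun x => by ring
  simp only [e] at h
  rw [integral_const_mul] at h
  linarith

def ZZ (k : ℕ) : ℝ := ∫ x in (0:ℝ)..1, x^k/(1+x)
lemma ZZ_int (k : ℕ) : IntervalIntegrable (fun x : ℝ => x^k/(1+x)) volume 0 1 := by
  refine ContinuousOn.intervalIntegrable (ContinuousOn.div (by fun_prop) (by fun_prop) ?_)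
  intro x hx
  rw [uIcc_of_le zero_le_one] at hx
  linarith [hx.1]
lemma ZZ_rec (k : ℕ) : ZZ k + ZZ (k+1) = 1/((k:ℝ)+1) := by
  unfold ZZ
  rw [← intervalIntegral.integral_add (ZZ_int _) (ZZ_int _)]
  have : ∫ x in (0:ℝ)..1, (x^k/(1+x) + x^(k+1)/(1+x)) = ∫ x in (0:ℝ)..1, x^k := by
    refine intervalIntegral.integral_congr fun x hx => ?_
    rw [uIcc_of_le zero_le_one] at hx
    have : 1 + x ≠ 0 := by linarith [hx.1]
    field_simp
    ring
  rw [this, integral_pow]; simp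
lemma ZZ_nn (k : ℕ) : 0 ≤ ZZ k := by
  refine intervalIntegral.integral_nonneg zero_le_one fun x hx => ?_
  have := hx.1
  positivity

lemma cl : ContinuousOn (fun x : ℝ => Real.log (1+x)) (Icc 0 1) :=
  ContinuousOn.log (by fun_prop) fun x hx => by linarith [hx.1]

def YY (k : ℕ) : ℝ := ∫ x in (0:ℝ)..1, x^k * Real.log (1+x)
lemma YY_int (k : ℕ) : IntervalIntegrable (fun x : ℝ => x^k * Real.log (1+x)) volume 0 1 := by
  refine ContinuousOn.intervalIntegrable ?_
  rw [uIcc_of_le zero_le_one]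
  exact (continuousOn_id.pow k).mul cl
lemma ZY (k : ℕ) : ZZ (k+1) + (k+1) * YY k = Real.log 2 := by
  unfold ZZ YY
  rw [← intervalIntegral.integral_const_mul, ← intervalIntegral.integral_add (ZZ_int _) ((YY_int _).const_mul _)]
  rw [intervalIntegral.integral_eq_sub_of_hasDerivAt (f := fun x => x^(k+1) * Real.log (1+x))]
  · norm_num
  · intro x hx
    rw [uIcc_of_le zero_le_one] at hx
    have : 1 + x ≠ 0 := by linarith [hx.1]
    refine hd ((hasDerivAt_pow (k+1) x).mul (((hasDerivAt_id x).const_add 1).log this)) ?_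
    simp
    ring
  · exact (ZZ_int _).add ((YY_int _).const_mul _)
lemma ZZ0 : ZZ 0 = Real.log 2 := by
  unfold ZZ
  rw [intervalIntegral.integral_eq_sub_of_hasDerivAt (f := fun x => Real.log (1+x))]
  · norm_num
  · intro x hx
    rw [uIcc_of_le zero_le_one] at hx
    have : 1 + x ≠ 0 := by linarith [hx.1]
    refine hd (((hasDerivAt_id x).const_add 1).log this) ?_
    simp
  · exact ZZ_int 0

lemma YY_sum : HasSum (fun k : ℕ => 1/((k:ℝ)+1) * YY k) (5/8*z3) := by
  have hY0 : ∀ k, 0 ≤ YY k := fun k => by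
    refine intervalIntegral.integral_nonneg zero_le_one fun x hx => ?_
    have := hx.1
    have := Real.log_nonneg (by linarith : 1 ≤ 1 + x)
    positivity
  have hs : Summable (fun k : ℕ => 1/((k:ℝ)+1) * YY k) := by
    refine Summable.of_nonneg_of_le (fun k => mul_nonneg (by positivity) (hY0 k)) (fun k => ?_) (hz2.summable.mul_left (Real.log 2))
    have h1 := ZY k
    have h2 := ZZ_nn (k+1)
    have : YY k ≤ Real.log 2 / (k+1) := by rw [le_div_iff₀ (by positivity)]; linarith
    calc 1/((k:ℝ)+1) * YY k ≤ 1/((k:ℝ)+1) * (Real.log 2 / (k+1)) := by gcongr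
      _ = _ := by field_simp
  have := hasSum_int (F := fun k x => 1/((k:ℝ)+1) * (x^k * Real.log (1+x))) 
    (f := fun x => (-Real.log (1-x)/x) * Real.log (1+x)) (fun k => ?_) ?_ (fun k => ?_) hs.hasSum ?_
  · rw [← int_Q, this.2]; exact hs.hasSum
  · exact (((intervalIntegrable_iff_integrableOn_Ioc_of_le zero_le_one).1 (YY_int k)).mono_set Ioo_subset_Ioc_self).const_mul _
  · intro k x hx
    have := hx.1
    have := Real.log_nonneg (by linarith : 1 ≤ 1 + x)
    positivity
  · rw [integral_const_mul, ← integral_Ioc_eq_integral_Ioo, ← intervalIntegral.integral_of_le zero_le_one]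
    rfl
  · intro x hx
    have h1 := Real.hasSum_pow_div_log_of_abs_lt_one (x := x) (by rw [abs_of_pos hx.1]; exact hx.2)
    refine hsc ((h1.div_const x).mul_right (Real.log (1+x))) (fun k => ?_) rfl
    have := hx.1
    field_simp
    ring

lemma ZZ_sum : HasSum (fun k : ℕ => ZZ k / ((k:ℝ)+1)^2) (13/8*z3 - Real.log 2 * (Real.pi^2/6)) := by
  refine hsc ((hz3.sub (hz2.mul_left (Real.log 2))).add YY_sum) (fun k => ?_) ?_
  · 
    have h1 := ZY k
    have h2 := ZZ_rec k
    have : ZZ k = 1/((k:ℝ)+1) - Real.log 2 + (k+1) * YY k := by linarith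
    rw [this]
    field_simp
  · ring

lemma X_main {X : ℕ → ℝ} (h0 : ∀ k, 0 ≤ X k) (hr : ∀ k : ℕ, X k + X (k+1) = 1 / ((k:ℝ)+1)^2) :
    Tendsto (fun n => ∑ k ∈ Finset.range n, X (k+1)/(k+1)) atTop
      (𝓝 (13/8*z3 - Real.log 2 * (Real.pi^2/4))) := by
  have hXl : Tendsto X atTop (𝓝 0) := by
    refine squeeze_zero h0 (fun k => ?_) hz2.summable.tendsto_atTop_zero
    have := hr k; have := h0 (k+1); linarith
  have hX0 : X 0 = Real.pi^2/12 := by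
    have hodd := odd_sum 2 (by norm_num) hz2
    have hev : HasSum (fun n : ℕ => 1/(2*(n:ℝ)+2)^2) (Real.pi^2/24) := by
      exact hsc (hz2.div_const 4) (fun n => by field_simp; ring) (by ring)
    have h1 := (hodd.sub hev).tendsto_sum_nat
    have h2 : ∀ n, ∑ k ∈ Finset.range n, (1/(2*(k:ℝ)+1)^2 - 1/(2*(k:ℝ)+2)^2) = X 0 - X (2*n) := by
      intro n
      induction n with
      | zero => simp
      | succ n ih =>
        rw [Finset.sum_range_succ, ih]
        have a := hr (2*n)
        have b := hr (2*n+1)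
        push_cast at a b
        rw [show 2*(n:ℝ)+1+1 = 2*n+2 by ring] at b
        rw [show 2*(n+1) = 2*n+1+1 by ring]
        linarith
    simp only [h2] at h1
    have h3 : Tendsto (fun n => X 0 - X (2*n)) atTop (𝓝 (X 0 - 0)) :=
      tendsto_const_nhds.sub (hXl.comp (tendsto_id.const_mul_atTop' two_pos))
    have := tendsto_nhds_unique h3 h1
    linarith
  have hZl : Tendsto ZZ atTop (𝓝 0) := by
    refine squeeze_zero ZZ_nn (fun k => ?_) tendsto_one_div_add_atTop_nhds_zero_nat
    have := ZZ_rec k; have := ZZ_nn (k+1); linarith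
  have key : ∀ n, ∑ k ∈ Finset.range n, X (k+1)/((k:ℝ)+1) =
      ∑ k ∈ Finset.range n, ZZ k / ((k:ℝ)+1)^2 - ZZ 0 * X 0 + ZZ n * X n := by
    intro n
    induction n with
    | zero => simp
    | succ n ih =>
      rw [Finset.sum_range_succ, Finset.sum_range_succ, ih]
      have a : X (n+1)/((n:ℝ)+1) = X (n+1) * (ZZ n + ZZ (n+1)) := by rw [ZZ_rec]; ring
      have b : ZZ n / ((n:ℝ)+1)^2 = ZZ n * (X n + X (n+1)) := by rw [hr]; ring
      rw [a, b]; ring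
  simp only [key]
  convert (ZZ_sum.tendsto_sum_nat.sub_const (ZZ 0 * X 0)).add (hZl.mul hXl) using 2
  rw [ZZ0, hX0]; ring

end PartB

section PartC
lemma p1_val : p₁ = ((√2/2 : ℝ) : ℂ) * (1 + Complex.I) := by
  unfold p₁
  rw [show Complex.I * ((Real.pi : ℂ) / 4) = ((Real.pi/4 : ℝ) : ℂ) * Complex.I by push_cast; ring,
    Complex.exp_mul_I, ← Complex.ofReal_cos, ← Complex.ofReal_sin, Real.cos_pi_div_four,
    Real.sin_pi_div_four]
  ring
lemma p2_val : p₂ = ((√2/2 : ℝ) : ℂ) * (-1 + Complex.I) := by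
  unfold p₂
  rw [show -(Complex.I * ((Real.pi : ℂ) / 4)) = ((-(Real.pi/4) : ℝ) : ℂ) * Complex.I by
      push_cast; ring,
    Complex.exp_mul_I, ← Complex.ofReal_cos, ← Complex.ofReal_sin, Real.cos_neg, Real.sin_neg,
    Real.cos_pi_div_four, Real.sin_pi_div_four]
  push_cast
  ring
lemma csq2 : ((√2 : ℝ) : ℂ)^2 = 2 := by rw [← Complex.ofReal_pow, sq2]; simp
lemma prodA (t : ℝ) : ((t:ℂ) - p₁) * ((t:ℂ) - p₃) = (t:ℂ)^2 - Complex.I := by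
  unfold p₃
  rw [p1_val]
  push_cast
  linear_combination (-(1 + Complex.I)^2/4) * csq2 - (1/2 : ℂ) * Complex.I_sq
lemma prodB (t : ℝ) : ((t:ℂ) - p₂) * ((t:ℂ) - p₄) = (t:ℂ)^2 + Complex.I := by
  unfold p₄
  rw [p2_val]
  push_cast
  linear_combination (-(-1 + Complex.I)^2/4) * csq2 - (1/2 : ℂ) * Complex.I_sq
lemma prodAB (t : ℝ) : ((t:ℂ)^2 - Complex.I) * ((t:ℂ)^2 + Complex.I) = 1 + (t:ℂ)^4 := by
  linear_combination - Complex.I_sq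
lemma cden (t : ℝ) : 1 + (t:ℂ)^4 ≠ 0 := by
  have := den_ne t
  exact_mod_cast this
lemma A_ne (t : ℝ) : (t:ℂ)^2 - Complex.I ≠ 0 := fun h => by
  have := prodAB t; rw [h, zero_mul] at this; exact cden t this.symm
lemma B_ne (t : ℝ) : (t:ℂ)^2 + Complex.I ≠ 0 := fun h => by
  have := prodAB t; rw [h, mul_zero] at this; exact cden t this.symm
lemma ne1 (t : ℝ) : (t:ℂ) - p₁ ≠ 0 := fun h => by
  have := prodA t; rw [h, zero_mul] at this; exact A_ne t this.symm
lemma ne3 (t : ℝ) : (t:ℂ) - p₃ ≠ 0 := fun h => by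
  have := prodA t; rw [h, mul_zero] at this; exact A_ne t this.symm
lemma ne2 (t : ℝ) : (t:ℂ) - p₂ ≠ 0 := fun h => by
  have := prodB t; rw [h, zero_mul] at this; exact B_ne t this.symm
lemma ne4 (t : ℝ) : (t:ℂ) - p₄ ≠ 0 := fun h => by
  have := prodB t; rw [h, mul_zero] at this; exact B_ne t this.symm
lemma addA (t : ℝ) : 1/((t:ℂ) - p₁) + 1/((t:ℂ) - p₃) = 2 * t * ((t:ℂ)^2 + Complex.I) / (1 + (t:ℂ)^4) := by
  have := ne1 t; have := ne3 t; have := B_ne t; have := A_ne t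
  rw [div_add_div _ _ (ne1 t) (ne3 t), prodA, ← prodAB]
  field_simp
  unfold p₃; ring
lemma subA (t : ℝ) : 1/((t:ℂ) - p₁) - 1/((t:ℂ) - p₃) = 2 * p₁ * ((t:ℂ)^2 + Complex.I) / (1 + (t:ℂ)^4) := by
  have := ne1 t; have := ne3 t; have := B_ne t; have := A_ne t
  rw [div_sub_div _ _ (ne1 t) (ne3 t), prodA, ← prodAB]
  field_simp
  unfold p₃; ring
lemma addB (t : ℝ) : 1/((t:ℂ) - p₂) + 1/((t:ℂ) - p₄) = 2 * t * ((t:ℂ)^2 - Complex.I) / (1 + (t:ℂ)^4) := by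
  have := ne2 t; have := ne4 t; have := B_ne t; have := A_ne t
  rw [div_add_div _ _ (ne2 t) (ne4 t), prodB, ← prodAB]
  field_simp
  unfold p₄; ring
lemma subB (t : ℝ) : 1/((t:ℂ) - p₂) - 1/((t:ℂ) - p₄) = 2 * p₂ * ((t:ℂ)^2 - Complex.I) / (1 + (t:ℂ)^4) := by
  have := ne2 t; have := ne4 t; have := B_ne t; have := A_ne t
  rw [div_sub_div _ _ (ne2 t) (ne4 t), prodB, ← prodAB]
  field_simp
  unfold p₄; ring
lemma F1_val (t : ℝ) : F₁ t = (2 * Complex.I) * ((w1 t : ℝ) : ℂ) := by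
  have : F₁ t = (1/((t:ℂ) - p₁) + 1/((t:ℂ) - p₃)) - (1/((t:ℂ) - p₂) + 1/((t:ℂ) - p₄)) := by
    unfold F₁; ring
  rw [this, addA, addB]
  unfold w1
  push_cast
  ring
lemma F2_val (t : ℝ) : F₂ t = (-2) * ((w2 t : ℝ) : ℂ) := by
  have : F₂ t = (1/((t:ℂ) - p₁) - 1/((t:ℂ) - p₃)) - (1/((t:ℂ) - p₂) - 1/((t:ℂ) - p₄)) := by
    unfold F₂; ring
  rw [this, subA, subB, p1_val, p2_val]
  unfold w2
  push_cast
  rw [← sub_div, ← mul_div_assoc]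
  congr 1
  linear_combination (2 * (√2:ℂ)) * Complex.I_sq
lemma F3_val (t : ℝ) : F₃ t = (2 * Complex.I) * ((w3 t : ℝ) : ℂ) := by
  have : F₃ t = (1/((t:ℂ) - p₁) - 1/((t:ℂ) - p₃)) + (1/((t:ℂ) - p₂) - 1/((t:ℂ) - p₄)) := by
    unfold F₃; ring
  rw [this, subA, subB, p1_val, p2_val]
  unfold w3
  push_cast
  ring

lemma step (F : ℂ → ℂ) (c d : ℂ) (f w : ℝ → ℝ) (hF : ∀ t : ℝ, F t = c * ((w t : ℝ) : ℂ)) :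
    (fun z : ℝ => ∫ t in (0:ℝ)..z, (d * ((f t : ℝ) : ℂ)) * F (t : ℂ)) =
      fun z => (d * c) * ((II f w z : ℝ) : ℂ) := by
  funext z
  unfold II
  rw [← intervalIntegral.integral_ofReal, ← intervalIntegral.integral_const_mul]
  congr 1
  funext t
  rw [hF]; push_cast; ring

lemma Omega_val : Omega [F₃, F₁, F₂, F₃] 1 = 16 * Complex.I * ((JJ 0 : ℝ) : ℂ) := by
  unfold Omega
  simp only [List.foldl]
  have e0 : (fun z : ℝ => ∫ t in (0:ℝ)..z, (1:ℂ) * F₃ (t:ℂ)) =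
      fun z => (1 * (2 * Complex.I)) * ((VV 0 z : ℝ) : ℂ) := by
    have := step F₃ (2 * Complex.I) 1 (fun t => qq t ^ 0) w3 F3_val
    simpa [VV] using this
  have e0' := fun t => congrFun e0 t
  try simp only at e0'
  simp only [e0']
  have e1 := fun t => congrFun (step F₁ (2 * Complex.I) (1 * (2 * Complex.I)) (VV 0) w1 F1_val) t
  try simp only at e1
  simp only [e1]
  have e2 := fun t => congrFun (step F₂ (-2) (1 * (2 * Complex.I) * (2 * Complex.I)) (II (VV 0) w1) w2 F2_val) t
  try simp only at e2
  simp only [e2]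
  have e3 := fun t => congrFun (step F₃ (2 * Complex.I) (1 * (2 * Complex.I) * (2 * Complex.I) * (-2)) (II (II (VV 0) w1) w2) w3 F3_val) t
  try simp only at e3
  rw [e3]
  have : JJ 0 = II (II (II (VV 0) w1) w2) w3 1 := by
    unfold JJ RR
    simp only [aa_zero, one_mul]
  rw [this]
  linear_combination (-16 * Complex.I * ((II (II (II (VV 0) w1) w2) w3 1 : ℝ) : ℂ)) * Complex.I_sq

lemma JJ_val : JJ 0 = Real.pi/16 * (13/8*z3 - Real.log 2 * (Real.pi^2/4)) := by
  have h := tendsto_nhds_unique sum_lim (X_main XX_nn XX_rec)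
  rw [← h]
  field_simp
end PartC

theorem stmt_16 :
    Omega [F₃, F₁, F₂, F₃] 1 =
      -(Complex.I * (Real.pi : ℂ) ^ 3 / 4) * ((Real.log 2 : ℝ) : ℂ) +
        (13 / 8 : ℂ) * Complex.I * (Real.pi : ℂ) * riemannZeta 3 := by
  rw [Omega_val, JJ_val, zeta3]
  push_cast
  ring
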